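/- Let T be the bounded linear operator on ℓ²(ℤ, ℂ) determined on the canonical orthonormal basis (e_n)_{n∈ℤ} by T e_n = ω_n e_{n−1}, where ω_n = (n+2)/(n+1) if n ≥ 0 and ω_n = (|n|−1)/|n| if n < 0. Then T is distributionally chaotic. -/

import Mathlib

open Filter Topology MeasureTheory
open scoped Classical ENNReal

noncomputable def distFreq {X : Type*} [MetricSpace X] (f : X → X) (x y : X) (τ : ℝ) (n : ℕ) : ℝ :=
  (((Finset.range n).filter fun i => dist (f^[i] x) (f^[i] y) < τ).card : ℝ) / n

def DistributionallyChaoticPair {X : Type*} [MetricSpace X] (f : X → X) (x y : X) : Prop :=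
  (∀ τ : ℝ, 0 < τ → Filter.limsup (distFreq f x y τ) Filter.atTop = 1) ∧
  (∃ ε : ℝ, 0 < ε ∧ Filter.liminf (distFreq f x y ε) Filter.atTop = 0)

def DistributionallyChaotic {X : Type*} [MetricSpace X] (f : X → X) : Prop :=
  ∃ Λ : Set X, ¬Λ.Countable ∧
    ∀ x ∈ Λ, ∀ y ∈ Λ, x ≠ y → DistributionallyChaoticPair f x y

def LiYorkePair {X : Type*} [MetricSpace X] (f : X → X) (x y : X) : Prop :=
  0 < Filter.limsup (fun n => edist (f^[n] x) (f^[n] y)) Filter.atTop ∧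
  Filter.liminf (fun n => edist (f^[n] x) (f^[n] y)) Filter.atTop = 0

def LiYorkeChaotic {X : Type*} [MetricSpace X] (f : X → X) : Prop :=
  ∃ Γ : Set X, ¬Γ.Countable ∧ ∀ x ∈ Γ, ∀ y ∈ Γ, x ≠ y → LiYorkePair f x y

def NormUnimodal {X : Type*} [NormedAddCommGroup X] [NormedSpace ℂ X] (T : X →L[ℂ] X) : Prop :=
  ∃ r : ℝ, 1 < r ∧ ∀ m : ℕ, ∃ x : X, x ≠ 0 ∧
    Filter.Tendsto (fun k => ‖(T ^ k) x‖) Filter.atTop (nhds 0) ∧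
    ∀ i : ℕ, 1 ≤ i → i ≤ m → r ^ i * ‖x‖ ≤ ‖(T ^ i) x‖

/-!
On the coordinates `i ≥ -1` the weights telescope: `ω (-1) = 0`, and the coordinate of `T ^ k x` at
`m - 1` is `(m + k + 1) / (m + 1)` times that of `x` at `m + k - 1`. Let `x` have coordinate
`1 / (m + 1)` at `m - 1` for `m` in a union `S` of very long blocks separated by very long gaps,
and `0` elsewhere. If `k ∈ S`, then `T ^ k x` has coordinate `1` at `-1`. If `k` lies in the first
half of a gap, so that `S` misses `[k, 2 * k)`, then only the coordinates with `m ≥ k` survive;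
there the telescoped weight is at most `2`, so `‖T ^ k x‖` is at most twice a tail of `x`. Hence
the pair `{x, 0}` is distributionally chaotic, and by linearity so is every pair of distinct
multiples of `x`.
-/

section LimsupAlongSubsequence

variable {ι κ α : Type*} [ConditionallyCompleteLinearOrder α] [TopologicalSpace α]
  [OrderTopology α] {l : Filter ι} {l' : Filter κ} [l'.NeBot] {u : ι → α} {φ : κ → ι} {c : α}

theorem limsup_eq_of_le_of_tendsto_comp (hu : ∀ i, u i ≤ c) (hφ : Tendsto φ l' l)
    (h : Tendsto (u ∘ φ) l' (𝓝 c)) : limsup u l = c := by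
  have hcobdd : IsCoboundedUnder (· ≤ ·) l u :=
    IsCobounded.mono (map_mono hφ) (map_map (f := l') ▸ h.isCoboundedUnder_le)
  refine le_antisymm (limsup_le_of_le hcobdd (.of_forall hu)) ?_
  calc c = limsup (u ∘ φ) l' := h.limsup_eq.symm
    _ ≤ limsup u l :=
      hφ.limsup_comp_le_limsup h.isCoboundedUnder_le (isBoundedUnder_of ⟨c, hu⟩)

theorem liminf_eq_of_le_of_tendsto_comp (hu : ∀ i, c ≤ u i) (hφ : Tendsto φ l' l)
    (h : Tendsto (u ∘ φ) l' (𝓝 c)) : liminf u l = c :=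
  limsup_eq_of_le_of_tendsto_comp (α := αᵒᵈ) hu hφ h

end LimsupAlongSubsequence

section Frequencies

variable {X : Type*} [MetricSpace X] {f : X → X} {x y : X} {τ : ℝ} {m n : ℕ}

theorem distFreq_nonneg : 0 ≤ distFreq f x y τ n :=
  div_nonneg (Nat.cast_nonneg _) (Nat.cast_nonneg _)

theorem distFreq_le_one : distFreq f x y τ n ≤ 1 := by
  refine div_le_one_of_le₀ (Nat.cast_le.2 ?_) (Nat.cast_nonneg n)
  simpa only [Finset.card_range] using Finset.card_filter_le (Finset.range n) _

theorem distFreq_self (hτ : 0 < τ) (hn : n ≠ 0) : distFreq f x x τ n = 1 := by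
  simp [distFreq, hτ, hn]

theorem distFreq_le_div (h : ∀ i ∈ Set.Ico m n, τ ≤ dist (f^[i] x) (f^[i] y)) :
    distFreq f x y τ n ≤ m / n := by
  have hsub : {i ∈ Finset.range n | dist (f^[i] x) (f^[i] y) < τ} ⊆ Finset.range m := by
    intro i hi
    rw [Finset.mem_filter, Finset.mem_range] at hi
    by_contra hmi
    exact (h i ⟨not_lt.1 fun him => hmi (Finset.mem_range.2 him), hi.1⟩).not_gt hi.2
  unfold distFreq
  gcongr
  simpa only [Finset.card_range] using Finset.card_le_card hsub

theorem one_sub_div_le_distFreq (hn : 0 < n)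
    (h : ∀ i ∈ Set.Ico m n, dist (f^[i] x) (f^[i] y) < τ) :
    1 - m / n ≤ distFreq f x y τ n := by
  have hsub : Finset.Ico m n ⊆ {i ∈ Finset.range n | dist (f^[i] x) (f^[i] y) < τ} := by
    intro i hi
    have hi' := Finset.mem_Ico.1 hi
    exact Finset.mem_filter.2 ⟨Finset.mem_range.2 hi'.2, h i hi'⟩
  have hcard : (n : ℝ) - m ≤ ((Finset.Ico m n).card : ℝ) := by
    rw [Nat.card_Ico, sub_le_iff_le_add]
    exact_mod_cast le_tsub_add
  have hn' : (0 : ℝ) < n := Nat.cast_pos.2 hn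
  rw [one_sub_div hn'.ne']
  unfold distFreq
  gcongr
  exact hcard.trans (Nat.cast_le.2 (Finset.card_le_card hsub))

theorem distributionallyChaoticPair_of_windows {ι : Type*} {l : Filter ι} [l.NeBot]
    {a b c d : ι → ℕ} {ε : ℝ} (hε : 0 < ε)
    (hb : Tendsto b l atTop) (hab : Tendsto (fun j => (a j / b j : ℝ)) l (𝓝 0))
    (hfar : ∀ᶠ j in l, ∀ i ∈ Set.Ico (a j) (b j), ε ≤ dist (f^[i] x) (f^[i] y))
    (hd : Tendsto d l atTop) (hcd : Tendsto (fun j => (c j / d j : ℝ)) l (𝓝 0))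
    (hclose : ∀ τ : ℝ, 0 < τ →
      ∀ᶠ j in l, ∀ i ∈ Set.Ico (c j) (d j), dist (f^[i] x) (f^[i] y) < τ) :
    DistributionallyChaoticPair f x y := by
  refine ⟨fun τ hτ => ?_, ε, hε, ?_⟩
  · have hlower : Tendsto (fun j => 1 - (c j / d j : ℝ)) l (𝓝 1) := by
      simpa only [sub_zero] using hcd.const_sub 1
    refine limsup_eq_of_le_of_tendsto_comp (fun _ => distFreq_le_one) hd
      (tendsto_of_tendsto_of_tendsto_of_le_of_le' hlower tendsto_const_nhds ?_
        (.of_forall fun _ => distFreq_le_one))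
    filter_upwards [hclose τ hτ, hd.eventually_gt_atTop 0] with j hj hdj
    exact one_sub_div_le_distFreq hdj hj
  · refine liminf_eq_of_le_of_tendsto_comp (fun _ => distFreq_nonneg) hb
      (tendsto_of_tendsto_of_tendsto_of_le_of_le' tendsto_const_nhds hab
        (.of_forall fun _ => distFreq_nonneg) ?_)
    filter_upwards [hfar] with j hj
    exact distFreq_le_div hj

theorem DistributionallyChaoticPair.ne (h : DistributionallyChaoticPair f x y) : x ≠ y := by
  rintro rfl
  obtain ⟨-, ε, hε, hliminf⟩ := h
  have hone : (fun _ => (1 : ℝ)) =ᶠ[atTop] distFreq f x x ε := by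
    filter_upwards [eventually_ne_atTop 0] with n hn
    exact (distFreq_self hε hn).symm
  have hlim : liminf (distFreq f x x ε) atTop = 1 :=
    (tendsto_const_nhds.congr' hone).liminf_eq
  exact one_ne_zero (hlim.symm.trans hliminf)

end Frequencies

section LinearMaps

variable {𝕜 E : Type*} [NormedField 𝕜] [NormedAddCommGroup E] [NormedSpace 𝕜 E]
  {T : E →ₗ[𝕜] E} {x y : E}

theorem distFreq_smul_sub {a b : 𝕜} (hab : a ≠ b) (τ : ℝ) :
    distFreq T (a • (x - y)) (b • (x - y)) τ = distFreq T x y (τ / ‖a - b‖) := by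
  have hpos : 0 < ‖a - b‖ := norm_pos_iff.2 (sub_ne_zero.2 hab)
  have hdist (i : ℕ) : dist (T^[i] (a • (x - y))) (T^[i] (b • (x - y))) =
      dist (T^[i] x) (T^[i] y) * ‖a - b‖ := by
    simp only [← Module.End.coe_pow, dist_eq_norm, ← map_sub, ← sub_smul, map_smul, norm_smul,
      mul_comm]
  funext n
  simp only [distFreq, hdist, lt_div_iff₀ hpos]

theorem DistributionallyChaoticPair.smul_sub (h : DistributionallyChaoticPair T x y) {a b : 𝕜}
    (hab : a ≠ b) : DistributionallyChaoticPair T (a • (x - y)) (b • (x - y)) := by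
  have hpos : 0 < ‖a - b‖ := norm_pos_iff.2 (sub_ne_zero.2 hab)
  obtain ⟨hclose, ε, hε, hfar⟩ := h
  refine ⟨fun τ hτ => ?_, ε * ‖a - b‖, mul_pos hε hpos, ?_⟩
  · rw [distFreq_smul_sub hab]
    exact hclose _ (div_pos hτ hpos)
  · rwa [distFreq_smul_sub hab, mul_div_cancel_right₀ _ hpos.ne']

theorem DistributionallyChaoticPair.distributionallyChaotic [Uncountable 𝕜]
    (h : DistributionallyChaoticPair T x y) : DistributionallyChaotic T := by
  refine ⟨Set.range fun a : 𝕜 => a • (x - y), fun hcount => ?_, ?_⟩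
  · have hinj := smul_left_injective 𝕜 (sub_ne_zero.2 h.ne)
    rw [← Set.image_univ] at hcount
    exact Set.not_countable_univ (Set.countable_of_injective_of_countable_image hinj.injOn hcount)
  · rintro _ ⟨a, rfl⟩ _ ⟨b, rfl⟩ hab
    exact h.smul_sub fun heq => hab (congrArg (· • (x - y)) heq)

end LinearMaps

section WeightedShift

theorem natCast_sub_one_injective : Function.Injective fun m : ℕ => (m : ℤ) - 1 :=
  fun m n hmn => by lia

variable {𝕜 : Type*} {p : ℝ≥0∞} [Fact (1 ≤ p)]

/-- `T` is the bilateral weighted backward shift `T e_n = w n • e_{n - 1}` on `ℓ^p(ℤ, 𝕜)`. -/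
def IsWeightedBackwardShift [NontriviallyNormedField 𝕜]
    (T : lp (fun _ : ℤ => 𝕜) p →L[𝕜] lp (fun _ : ℤ => 𝕜) p) (w : ℤ → 𝕜) : Prop :=
  ∀ n : ℤ, T (lp.single p n (1 : 𝕜)) = w n • lp.single p (n - 1) (1 : 𝕜)

namespace IsWeightedBackwardShift

section NormedField

variable [NontriviallyNormedField 𝕜] {T : lp (fun _ : ℤ => 𝕜) p →L[𝕜] lp (fun _ : ℤ => 𝕜) p}
  {w : ℤ → 𝕜}

theorem apply (hT : IsWeightedBackwardShift T w) (hp : p ≠ ∞) (y : lp (fun _ : ℤ => 𝕜) p)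
    (i : ℤ) : T y i = w (i + 1) * y (i + 1) := by
  have hfunctionals : (lp.evalCLM 𝕜 (fun _ : ℤ => 𝕜) p i).comp T =
      w (i + 1) • lp.evalCLM 𝕜 (fun _ : ℤ => 𝕜) p (i + 1) := by
    refine lp.ext_continuousLinearMap hp fun n => ContinuousLinearMap.ext_ring ?_
    change T (lp.single p n (1 : 𝕜)) i =
      w (i + 1) * (lp.single p n (1 : 𝕜) : lp (fun _ : ℤ => 𝕜) p) (i + 1)
    rw [hT n]
    by_cases hn : n = i + 1
    · simp [hn]
    · simp [lp.single_apply, show ¬ i = n - 1 by lia, show ¬ i + 1 = n by lia]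
  exact DFunLike.congr_fun hfunctionals y

theorem iterate_apply (hT : IsWeightedBackwardShift T w) (hp : p ≠ ∞)
    (y : lp (fun _ : ℤ => 𝕜) p) (k : ℕ) (i : ℤ) :
    T^[k] y i = (∏ j ∈ Finset.range k, w (i + 1 + j)) * y (i + k) := by
  induction k generalizing i with
  | zero => simp
  | succ k ih =>
    rw [Function.iterate_succ_apply', hT.apply hp, ih, Finset.prod_range_succ']
    push_cast
    ring_nf

theorem iterate_apply_eq_zero (hT : IsWeightedBackwardShift T w) (hp : p ≠ ∞)
    (hw : w (-1) = 0) {y : lp (fun _ : ℤ => 𝕜) p} (hy : ∀ i < -1, y i = 0) (k : ℕ) {i : ℤ}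
    (hi : i < -1) : T^[k] y i = 0 := by
  induction k generalizing i with
  | zero => exact hy i hi
  | succ k ih =>
    rw [Function.iterate_succ_apply', hT.apply hp]
    rcases (show i + 1 ≤ -1 by lia).eq_or_lt with heq | hlt
    · rw [heq, hw, zero_mul]
    · rw [ih hlt, mul_zero]

end NormedField

variable [RCLike 𝕜] {T : lp (fun _ : ℤ => 𝕜) p →L[𝕜] lp (fun _ : ℤ => 𝕜) p} {w : ℤ → 𝕜}

theorem iterate_apply_natCast_sub_one (hT : IsWeightedBackwardShift T w) (hp : p ≠ ∞)
    (hw : ∀ n : ℕ, w n = (n + 2) / (n + 1)) (y : lp (fun _ : ℤ => 𝕜) p) (k m : ℕ) :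
    T^[k] y (m - 1) = (m + k + 1 : ℕ) / (m + 1 : ℕ) * y ((m + k : ℕ) - 1) := by
  have hprod : ∏ j ∈ Finset.range k, w (m + j) = (m + k + 1 : ℕ) / (m + 1 : ℕ) := by
    refine Finset.prod_range_induction _
      (fun k : ℕ => ((m + k + 1 : ℕ) / (m + 1 : ℕ) : 𝕜)) ?_ k fun j _ => ?_
    · exact div_self (Nat.cast_ne_zero.2 m.succ_ne_zero)
    · have hmj : ((m + j : ℕ) + 1 : 𝕜) ≠ 0 := Nat.cast_add_one_ne_zero _
      have hw_add : w (m + j) = ((m + j : ℕ) + 2) / ((m + j : ℕ) + 1) := by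
        rw [← hw, Nat.cast_add]
      rw [hw_add, ← add_assoc, Nat.cast_succ (m + j), div_mul_div_comm, mul_comm,
        mul_div_mul_right _ _ hmj]
      push_cast
      ring
  rw [hT.iterate_apply hp, sub_add_cancel, hprod, Nat.cast_add m k, add_sub_right_comm]

theorem norm_iterate_apply_le (hT : IsWeightedBackwardShift T w) (hp : p ≠ ∞)
    (hw : ∀ n : ℕ, w n = (n + 2) / (n + 1)) {y : lp (fun _ : ℤ => 𝕜) p} {k : ℕ}
    (hgap : ∀ m < k, y ((m + k : ℕ) - 1) = 0) (m : ℕ) :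
    ‖T^[k] y (m - 1)‖ ≤ 2 * ‖y ((m + k : ℕ) - 1)‖ := by
  rw [hT.iterate_apply_natCast_sub_one hp hw]
  rcases lt_or_ge m k with hmk | hkm
  · rw [hgap m hmk, mul_zero, norm_zero, mul_zero]
  · rw [norm_mul, norm_div, RCLike.norm_natCast, RCLike.norm_natCast]
    gcongr
    rw [div_le_iff₀ (by positivity)]
    exact_mod_cast (by lia : m + k + 1 ≤ 2 * (m + 1))

theorem norm_iterate_rpow_le (hT : IsWeightedBackwardShift T w) (hp : p ≠ ∞)
    (hw₀ : w (-1) = 0) (hw : ∀ n : ℕ, w n = (n + 2) / (n + 1)) {y : lp (fun _ : ℤ => 𝕜) p}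
    (hy : ∀ i < -1, y i = 0) {k : ℕ} (hgap : ∀ m < k, y ((m + k : ℕ) - 1) = 0) :
    ‖T^[k] y‖ ^ p.toReal ≤
      2 ^ p.toReal * ∑' m : ℕ, ‖y ((m + k : ℕ) - 1)‖ ^ p.toReal := by
  have hp₀ : 0 < p.toReal := ENNReal.toReal_pos (zero_lt_one.trans_le Fact.out).ne' hp
  have hsupp : Function.support (fun i : ℤ => ‖T^[k] y i‖ ^ p.toReal) ⊆
      Set.range fun m : ℕ => (m : ℤ) - 1 := by
    intro i hi
    have hi' : -1 ≤ i := by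
      by_contra! hlt
      simp [hT.iterate_apply_eq_zero hp hw₀ hy k hlt, hp₀.ne'] at hi
    exact ⟨(i + 1).toNat, by lia⟩
  have hle (m : ℕ) : ‖T^[k] y (m - 1)‖ ^ p.toReal ≤
      2 ^ p.toReal * ‖y ((m + k : ℕ) - 1)‖ ^ p.toReal := by
    rw [← Real.mul_rpow zero_le_two (norm_nonneg _)]
    gcongr
    exact hT.norm_iterate_apply_le hp hw hgap m
  have hsummable : Summable fun m : ℕ => 2 ^ p.toReal * ‖y ((m + k : ℕ) - 1)‖ ^ p.toReal :=
    (((lp.memℓp y).summable hp₀).comp_injective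
      (natCast_sub_one_injective.comp (add_left_injective k))).mul_left (2 ^ p.toReal)
  calc ‖T^[k] y‖ ^ p.toReal = ∑' i : ℤ, ‖T^[k] y i‖ ^ p.toReal := lp.norm_rpow_eq_tsum hp₀ _
    _ = ∑' m : ℕ, ‖T^[k] y (m - 1)‖ ^ p.toReal :=
      (natCast_sub_one_injective.tsum_eq hsupp).symm
    _ ≤ ∑' m : ℕ, 2 ^ p.toReal * ‖y ((m + k : ℕ) - 1)‖ ^ p.toReal :=
      (hsummable.of_nonneg_of_le (fun _ => by positivity) hle).tsum_le_tsum hle hsummable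
    _ = 2 ^ p.toReal * ∑' m : ℕ, ‖y ((m + k : ℕ) - 1)‖ ^ p.toReal := tsum_mul_left

theorem eventually_norm_iterate_lt (hT : IsWeightedBackwardShift T w) (hp : p ≠ ∞)
    (hw₀ : w (-1) = 0) (hw : ∀ n : ℕ, w n = (n + 2) / (n + 1)) {y : lp (fun _ : ℤ => 𝕜) p}
    (hy : ∀ i < -1, y i = 0) {τ : ℝ} (hτ : 0 < τ) :
    ∀ᶠ k : ℕ in atTop, (∀ m < k, y ((m + k : ℕ) - 1) = 0) → ‖T^[k] y‖ < τ := by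
  have hp₀ : 0 < p.toReal := ENNReal.toReal_pos (zero_lt_one.trans_le Fact.out).ne' hp
  have htail : Tendsto
      (fun k : ℕ => 2 ^ p.toReal * ∑' m : ℕ, ‖y ((m + k : ℕ) - 1)‖ ^ p.toReal) atTop (𝓝 0) := by
    simpa only [mul_zero] using
      (tendsto_sum_nat_add fun m : ℕ => ‖y (m - 1)‖ ^ p.toReal).const_mul (2 ^ p.toReal)
  filter_upwards [htail.eventually_lt_const (Real.rpow_pos_of_pos hτ p.toReal)] with k hk hgap
  exact (Real.rpow_lt_rpow_iff (norm_nonneg _) hτ.le hp₀).1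
    ((hT.norm_iterate_rpow_le hp hw₀ hw hy hgap).trans_lt hk)

end IsWeightedBackwardShift

end WeightedShift

section HarmonicVector

theorem memℓp_extend_zero {ι κ E : Type*} [NormedAddCommGroup E] {p : ℝ≥0∞}
    (hp : 0 < p.toReal) {e : κ → ι} (he : Function.Injective e) {a : κ → E} (ha : Memℓp a p) :
    Memℓp (Function.extend e a 0) p := by
  refine memℓp_gen ?_
  have hextend : (fun i => ‖Function.extend e a 0 i‖ ^ p.toReal) =
      Function.extend e (fun k => ‖a k‖ ^ p.toReal) 0 := by
    funext i
    rw [Function.apply_extend (fun z : E => ‖z‖ ^ p.toReal)]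
    congr 1
    funext j
    simp [hp.ne']
  rw [hextend]
  exact (summable_extend_zero he).2 (ha.summable hp)

variable (𝕜 : Type*) [RCLike 𝕜] {p : ℝ≥0∞}

theorem memℓp_indicator_natCast_succ_inv (hp : 1 < p.toReal) (S : Set ℕ) :
    Memℓp (S.indicator fun m : ℕ => ((m + 1 : ℕ) : 𝕜)⁻¹) p := by
  refine memℓp_gen ?_
  have hsummable : Summable fun m : ℕ => (((m + 1 : ℕ) : ℝ) ^ p.toReal)⁻¹ :=
    (summable_nat_add_iff 1).2 (Real.summable_nat_rpow_inv.2 hp)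
  refine hsummable.of_nonneg_of_le (fun m => by positivity) fun m => ?_
  rw [← Real.inv_rpow (Nat.cast_nonneg _), ← RCLike.norm_natCast (K := 𝕜), ← norm_inv]
  gcongr
  exact norm_indicator_le_norm_self _ _

/-- The vector of `ℓ^p(ℤ, 𝕜)` with coordinate `1 / (m + 1)` at `m - 1` for each `m ∈ S` and `0`
elsewhere; iterates of the shift carry the coordinate at `m - 1` to the coordinate `-1`, where it
becomes `1`. As `∞.toReal = 0`, the hypothesis `1 < p.toReal` means `1 < p < ∞`. -/
noncomputable def harmonicVector (hp : 1 < p.toReal) (S : Set ℕ) : lp (fun _ : ℤ => 𝕜) p :=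
  ⟨Function.extend (fun m : ℕ => (m : ℤ) - 1) (S.indicator fun m : ℕ => ((m + 1 : ℕ) : 𝕜)⁻¹) 0,
    memℓp_extend_zero (zero_lt_one.trans hp) natCast_sub_one_injective
      (memℓp_indicator_natCast_succ_inv 𝕜 hp S)⟩

variable (hp : 1 < p.toReal) {S : Set ℕ}

theorem harmonicVector_apply_of_mem {m : ℕ} (hm : m ∈ S) :
    harmonicVector 𝕜 hp S (m - 1) = ((m + 1 : ℕ) : 𝕜)⁻¹ :=
  (natCast_sub_one_injective.extend_apply _ _ m).trans (Set.indicator_of_mem hm _)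

theorem harmonicVector_apply_of_notMem {m : ℕ} (hm : m ∉ S) :
    harmonicVector 𝕜 hp S (m - 1) = 0 :=
  (natCast_sub_one_injective.extend_apply _ _ m).trans (Set.indicator_of_notMem hm _)

theorem harmonicVector_apply_of_lt {i : ℤ} (hi : i < -1) : harmonicVector 𝕜 hp S i = 0 :=
  Function.extend_apply' _ _ _ fun ⟨m, hm⟩ => by lia

theorem IsWeightedBackwardShift.one_le_norm_iterate_harmonicVector [Fact (1 ≤ p)]
    {T : lp (fun _ : ℤ => 𝕜) p →L[𝕜] lp (fun _ : ℤ => 𝕜) p} {w : ℤ → 𝕜}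
    (hT : IsWeightedBackwardShift T w) (hp' : p ≠ ∞) (hw : ∀ n : ℕ, w n = (n + 2) / (n + 1))
    {k : ℕ} (hk : k ∈ S) : 1 ≤ ‖T^[k] (harmonicVector 𝕜 hp S)‖ := by
  have hcoord : T^[k] (harmonicVector 𝕜 hp S) ((0 : ℕ) - 1) = 1 := by
    rw [hT.iterate_apply_natCast_sub_one hp' hw, zero_add, harmonicVector_apply_of_mem 𝕜 hp hk,
      zero_add, Nat.cast_one, div_one, mul_inv_cancel₀ (Nat.cast_ne_zero.2 k.succ_ne_zero)]
  calc (1 : ℝ) = ‖T^[k] (harmonicVector 𝕜 hp S) ((0 : ℕ) - 1)‖ := by rw [hcoord, norm_one]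
    _ ≤ ‖T^[k] (harmonicVector 𝕜 hp S)‖ :=
      lp.norm_apply_le_norm (zero_lt_one.trans_le Fact.out).ne' _ _

end HarmonicVector

section FactorialBlocks

open scoped Nat

/-- The set of natural numbers `m` with `(2 * j)! ≤ m < (2 * j + 1)!` for some `j`: both its blocks
and the gaps between them get arbitrarily long relative to their left endpoints. -/
def factorialBlocks : Set ℕ := ⋃ j : ℕ, Set.Ico (2 * j)! (2 * j + 1)!

theorem notMem_factorialBlocks {j m : ℕ} (hm : m ∈ Set.Ico (2 * j + 1)! (2 * j + 2)!) :
    m ∉ factorialBlocks := by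
  rw [factorialBlocks, Set.mem_iUnion]
  rintro ⟨i, hi⟩
  rcases lt_or_ge j i with hji | hij
  · exact (Nat.factorial_le (by lia : 2 * j + 2 ≤ 2 * i)).not_gt (hi.1.trans_lt hm.2)
  · exact (Nat.factorial_le (by lia : 2 * i + 1 ≤ 2 * j + 1)).not_gt (hm.1.trans_lt hi.2)

theorem add_notMem_factorialBlocks {j k m : ℕ}
    (hk : k ∈ Set.Ico (2 * j + 1)! ((j + 1) * (2 * j + 1)!)) (hm : m < k) :
    m + k ∉ factorialBlocks := by
  refine notMem_factorialBlocks (j := j) ⟨hk.1.trans (Nat.le_add_left k m), ?_⟩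
  calc m + k < 2 * ((j + 1) * (2 * j + 1)!) := by linarith [hk.2]
    _ = (2 * j + 2)! := by rw [Nat.factorial_succ (2 * j + 1)]; ring

theorem tendsto_factorial_two_mul_add_one_atTop :
    Tendsto (fun j : ℕ => (2 * j + 1)!) atTop atTop :=
  tendsto_atTop_mono (fun j => (by lia : j ≤ 2 * j + 1).trans (Nat.self_le_factorial _)) tendsto_id

theorem tendsto_natCast_div_succ_mul {u : ℕ → ℕ} (hu : ∀ j, u j ≠ 0) :
    Tendsto (fun j : ℕ => (u j / ((j + 1) * u j : ℕ) : ℝ)) atTop (𝓝 0) := by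
  refine (tendsto_one_div_add_atTop_nhds_zero_nat (𝕜 := ℝ)).congr fun j => ?_
  rw [Nat.cast_mul, div_mul_cancel_right₀ (Nat.cast_ne_zero.2 (hu j)), one_div, Nat.cast_succ]

theorem tendsto_factorial_two_mul_div_factorial_two_mul_add_one :
    Tendsto (fun j : ℕ => ((2 * j)! / (2 * j + 1)! : ℝ)) atTop (𝓝 0) :=
  (tendsto_natCast_div_succ_mul Nat.factorial_ne_zero).comp
    (tendsto_id.const_mul_atTop' two_pos)

end FactorialBlocks

open scoped Nat in
theorem IsWeightedBackwardShift.distributionallyChaoticPair_harmonicVector_zero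
    {𝕜 : Type*} [RCLike 𝕜] {p : ℝ≥0∞} [Fact (1 ≤ p)]
    {T : lp (fun _ : ℤ => 𝕜) p →L[𝕜] lp (fun _ : ℤ => 𝕜) p} {w : ℤ → 𝕜}
    (hT : IsWeightedBackwardShift T w) (hp : 1 < p.toReal) (hp' : p ≠ ∞) (hw₀ : w (-1) = 0)
    (hw : ∀ n : ℕ, w n = (n + 2) / (n + 1)) :
    DistributionallyChaoticPair T (harmonicVector 𝕜 hp factorialBlocks) 0 := by
  set x := harmonicVector 𝕜 hp factorialBlocks
  have hdist (i : ℕ) : dist (T^[i] x) (T^[i] 0) = ‖T^[i] x‖ := by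
    rw [iterate_map_zero, dist_zero_right]
  have hfar (j : ℕ) : ∀ i ∈ Set.Ico (2 * j)! (2 * j + 1)!, 1 ≤ dist (T^[i] x) (T^[i] 0) := by
    intro i hi
    rw [hdist]
    exact hT.one_le_norm_iterate_harmonicVector 𝕜 hp hp' hw (Set.mem_iUnion.2 ⟨j, hi⟩)
  have hclose (τ : ℝ) (hτ : 0 < τ) : ∀ᶠ j in atTop,
      ∀ i ∈ Set.Ico (2 * j + 1)! ((j + 1) * (2 * j + 1)!), dist (T^[i] x) (T^[i] 0) < τ := by
    have hsmall := hT.eventually_norm_iterate_lt hp' hw₀ hw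
      (fun _ => harmonicVector_apply_of_lt 𝕜 hp (S := factorialBlocks)) hτ
    filter_upwards [tendsto_factorial_two_mul_add_one_atTop.eventually_forall_ge_atTop hsmall]
      with j hj i hi
    rw [hdist]
    exact hj i hi.1 fun m hm =>
      harmonicVector_apply_of_notMem 𝕜 hp (add_notMem_factorialBlocks hi hm)
  have hright : Tendsto (fun j : ℕ => (j + 1) * (2 * j + 1)!) atTop atTop :=
    tendsto_atTop_mono (fun j => Nat.le_mul_of_pos_left _ j.succ_pos)
      tendsto_factorial_two_mul_add_one_atTop
  exact distributionallyChaoticPair_of_windows zero_lt_one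
    tendsto_factorial_two_mul_add_one_atTop
    tendsto_factorial_two_mul_div_factorial_two_mul_add_one (.of_forall hfar) hright
    (tendsto_natCast_div_succ_mul fun j => Nat.factorial_ne_zero (2 * j + 1)) hclose

theorem stmt_6_general {𝕜 : Type*} [RCLike 𝕜] {p : ℝ≥0∞} [Fact (1 ≤ p)] (hp : 1 < p)
    (hp' : p ≠ ∞) (T : lp (fun _ : ℤ => 𝕜) p →L[𝕜] lp (fun _ : ℤ => 𝕜) p) (w : ℤ → 𝕜)
    (hw₀ : w (-1) = 0) (hw : ∀ n : ℕ, w n = (n + 2) / (n + 1))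
    (hT : IsWeightedBackwardShift T w) : DistributionallyChaotic T := by
  have hp₁ : 1 < p.toReal := by
    simpa only [ENNReal.toReal_one] using ENNReal.toReal_strict_mono hp' hp
  have : Uncountable 𝕜 := (RCLike.ofReal_injective (K := 𝕜)).uncountable
  exact DistributionallyChaoticPair.distributionallyChaotic (T := T.toLinearMap)
    (hT.distributionallyChaoticPair_harmonicVector_zero hp₁ hp' hw₀ hw)

/-- The bilateral weighted backward shift with weights
ω_n = (n+2)/(n+1) for n ≥ 0 and ω_n = (|n|-1)/|n| for n < 0 is
distributionally chaotic. -/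
theorem stmt_6 (T : lp (fun _ : ℤ => ℂ) 2 →L[ℂ] lp (fun _ : ℤ => ℂ) 2)
    (ω : ℤ → ℝ)
    (hω : ∀ n : ℤ, ω n = if 0 ≤ n then (((n : ℝ) + 2) / ((n : ℝ) + 1))
      else (((|n| : ℤ) : ℝ) - 1) / ((|n| : ℤ) : ℝ))
    (hT : ∀ n : ℤ, T (lp.single 2 n (1 : ℂ)) = ((ω n : ℝ) : ℂ) • lp.single 2 (n - 1) (1 : ℂ)) :
    DistributionallyChaotic (fun x => T x) := by
  exact stmt_6_general ENNReal.one_lt_two ENNReal.ofNat_ne_top T (fun n => ω n) (by simp [hω])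
    (fun n => by simp [hω]) hT
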